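/- Let k ≥ 2, m ≥ 1 satisfy the conditions of the proposition, and additionally k·d^m·log₂ b − 1 ≥ (1/3) m² (log ‖u‖_∞)². Then |g(b) − p_{k,m}/q_{k,m}| ≤ 3 · 2^{C√(log₂ q_{k,m} · log₂ log₂ q_{k,m})} / q_{k,m}², where C = 2√2 + 2√(5 log ‖u‖_∞) + 2. -/

import Mathlib

/-- The value of `g(z) = z^{-1}∏_{t≥0} P(z^{-d^t})` at an integer `b ≥ 2`. -/
noncomputable def mahlerG (d b : ℕ) (u : ℕ → ℤ) : ℝ :=
  ((b : ℝ))⁻¹ * ∏' t : ℕ, ∑ i ∈ Finset.range d, (u i : ℝ) * (((b : ℝ))⁻¹ ^ (d ^ t)) ^ i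

/-- `q_{k,m} = q_k(b^{d^m})`, where `q_k(z) = ∑_{j≤k} a_j z^j`. -/
noncomputable def mahlerQkm (d b k m : ℕ) (a : ℕ → ℤ) : ℝ :=
  ∑ j ∈ Finset.range (k + 1), (a j : ℝ) * ((b : ℝ) ^ (d ^ m)) ^ j

/-- `p_{k,m} = ∏_{t<m} P*(b^{d^t}) · p_k(b^{d^m})`, where `p_k(z) = ∑_{i<k} bc_i z^i` and
`P*(z) = z^{d-1}P(1/z)`. -/
noncomputable def mahlerPkm (d b k m : ℕ) (u bc : ℕ → ℤ) : ℝ :=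
  (∏ t ∈ Finset.range m,
      ∑ i ∈ Finset.range d, (u i : ℝ) * ((b : ℝ) ^ (d ^ t)) ^ (d - 1 - i)) *
    ∑ i ∈ Finset.range k, (bc i : ℝ) * ((b : ℝ) ^ (d ^ m)) ^ i

/-!
The coefficient `c_{n+1}` of `z ^ (-n - 1)` in `g(z)` is the product of the `u i` over the base-`d`
digits `i` of `n`, so it is at most `U ^ (log_d n + 1)`. The relations `∑ a_j c_{i+j} = 0` for
`1 ≤ i ≤ k` make `p_k / q_k` a Padé approximant, `q_k(z) g(z) - p_k(z) = O(z ^ (-k - 1))`, with a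
constant controlled by the bounds on `a` and `c`. The functional equation
`g(b) = ∏_{t<m} P*(b ^ d ^ t) · g(b ^ d ^ m)` carries this at `z = b ^ d ^ m` over to an
approximation of `g(b)` with error at most `2 C / q_{k,m} ^ 2`, where `C` is a product of powers of
`2`, `U`, `k` and `k + 1`. Since `log₂ q_{k,m} ≥ k d ^ m log₂ b - 1`, and the lower bound imposed on
`b ^ d ^ m` makes this large in terms of `k` and `U`, the logarithm of each factor of `C` is at
most a multiple of `√(log₂ q_{k,m} log₂ log₂ q_{k,m})`.
-/

section DigitProducts

/-- The product of `u` over the base-`d` digits of `n`. It is the coefficient of `x ^ n` in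
`∏ₜ P(x ^ d ^ t)`, hence of `z ^ (-n - 1)` in `g(z)`, which the paper calls `c_{n+1}`. -/
def digitProd {M : Type*} [Monoid M] (d : ℕ) (u : ℕ → M) (n : ℕ) : M :=
  ((Nat.digits d n).map u).prod

theorem digitProd_add_mul {M : Type*} [Monoid M] {d : ℕ} (hd : 1 < d) {u : ℕ → M} (hu0 : u 0 = 1)
    {i : ℕ} (hi : i < d) (q : ℕ) : digitProd d u (i + d * q) = u i * digitProd d u q := by
  by_cases h : i ≠ 0 ∨ q ≠ 0
  · simp only [digitProd, Nat.digits_add d hd i q hi h, List.map_cons, List.prod_cons]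
  · obtain ⟨rfl, rfl⟩ : i = 0 ∧ q = 0 := by tauto
    simp [digitProd, hu0]

theorem intCast_digitProd {R : Type*} [CommRing R] (d : ℕ) (u : ℕ → ℤ) (n : ℕ) :
    ((digitProd d u n : ℤ) : R) = digitProd d (fun i => (u i : R)) n := by
  simp only [digitProd, Int.cast_list_prod, List.map_map, Function.comp_def]

theorem abs_digitProd_le_pow_length {d : ℕ} (hd : 1 < d) {u : ℕ → ℝ} {U : ℝ}
    (hU : ∀ i < d, |u i| ≤ U) (n : ℕ) : |digitProd d u n| ≤ U ^ (Nat.digits d n).length := by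
  have hdigit : ∀ i ∈ Nat.digits d n, |u i| ≤ U := fun i hi => hU i (Nat.digits_lt_base hd hi)
  unfold digitProd
  generalize Nat.digits d n = digits at hdigit ⊢
  induction digits with
  | nil => simp
  | cons i l ih =>
    simp only [List.mem_cons, forall_eq_or_imp] at hdigit
    simp only [List.map_cons, List.prod_cons, List.length_cons, abs_mul, pow_succ']
    exact mul_le_mul hdigit.1 (ih hdigit.2) (abs_nonneg _) ((abs_nonneg _).trans hdigit.1)

theorem length_digits_le_logb_add {d n s : ℕ} (hd : 1 < d) {N : ℝ} (hN : 1 ≤ N)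
    (hn : n ≤ N * d ^ s) : (Nat.digits d n).length ≤ Real.logb d N + 1 + s := by
  have hd1 : (1 : ℝ) < d := by exact_mod_cast hd
  rcases Nat.eq_zero_or_pos n with rfl | hn0
  · have := Real.logb_nonneg hd1 hN
    rw [Nat.digits_zero, List.length_nil, Nat.cast_zero]
    positivity
  have hlog : Real.logb d n ≤ Real.logb d N + s := by
    calc Real.logb d n ≤ Real.logb d (N * d ^ s) :=
          Real.logb_le_logb_of_le hd1 (by exact_mod_cast hn0) hn
      _ = Real.logb d N + s := by
          rw [Real.logb_mul (by positivity) (by positivity), Real.logb_pow,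
            Real.logb_self_eq_one hd1, mul_one]
  rw [Nat.length_digits d n hd hn0.ne', Nat.cast_add_one]
  linarith [Real.natLog_le_logb n d]

theorem abs_digitProd_le_rpow_mul_pow {d n s : ℕ} (hd : 1 < d) {u : ℕ → ℝ} {U : ℝ} (hU1 : 1 ≤ U)
    (hU : ∀ i < d, |u i| ≤ U) {N : ℝ} (hN : 1 ≤ N) (hn : n ≤ N * d ^ s) :
    |digitProd d u n| ≤ U ^ (Real.logb d N + 1) * U ^ s := by
  refine (abs_digitProd_le_pow_length hd hU n).trans ?_
  rw [← Real.rpow_natCast, ← Real.rpow_natCast U s, ← Real.rpow_add (by linarith)]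
  exact Real.rpow_le_rpow_of_exponent_le hU1 (length_digits_le_logb_add hd hN hn)

theorem summable_digitProd_mul_pow {d : ℕ} (hd : 1 < d) {u : ℕ → ℝ} {U : ℝ} (hU1 : 1 ≤ U)
    (hU : ∀ i < d, |u i| ≤ U) {x : ℝ} (hUx : U * |x| < 1) :
    Summable fun n => digitProd d u n * x ^ n := by
  refine ((summable_geometric_of_lt_one (by positivity) hUx).mul_left U).of_norm_bounded
    fun n => ?_
  have hn : (n : ℝ) ≤ 1 * d ^ n := by exact_mod_cast (by simpa using (Nat.lt_pow_self hd).le)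
  have hcoeff : |digitProd d u n| ≤ U * U ^ n := by
    simpa using abs_digitProd_le_rpow_mul_pow hd hU1 hU le_rfl hn
  calc ‖digitProd d u n * x ^ n‖ = |digitProd d u n| * |x| ^ n := by
        rw [Real.norm_eq_abs, abs_mul, abs_pow]
    _ ≤ U * U ^ n * |x| ^ n := by gcongr
    _ = U * (U * |x|) ^ n := by rw [mul_pow, mul_assoc]

end DigitProducts

section MahlerProduct

open Finset

/-- The value at `x` of the polynomial `P` of degree less than `d` with coefficients `u`. -/
def digitPoly (d : ℕ) (u : ℕ → ℝ) (x : ℝ) : ℝ := ∑ i ∈ range d, u i * x ^ i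

/-- The value at `x` of the reversed polynomial `P*(z) = z ^ (d - 1) P(1 / z)`. -/
def reverseDigitPoly (d : ℕ) (u : ℕ → ℝ) (x : ℝ) : ℝ := ∑ i ∈ range d, u i * x ^ (d - 1 - i)

/-- The infinite product `F(x) = ∏ₜ P(x ^ d ^ t)`, so that `g(z) = z⁻¹ F(z⁻¹)`. -/
noncomputable def mahlerProduct (d : ℕ) (u : ℕ → ℝ) (x : ℝ) : ℝ :=
  ∏' t : ℕ, digitPoly d u (x ^ d ^ t)

theorem sum_range_mul_eq_sum_sum {M : Type*} [AddCommMonoid M] (d N : ℕ) (f : ℕ → M) :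
    ∑ n ∈ range (d * N), f n = ∑ q ∈ range N, ∑ i ∈ range d, f (i + d * q) := by
  induction N with
  | zero => simp
  | succ N ih =>
    rw [Nat.mul_succ, sum_range_add, ih, sum_range_succ]
    simp only [add_comm]

theorem prod_digitPoly_pow_eq_sum_digitProd {d : ℕ} (hd : 1 < d) {u : ℕ → ℝ} (hu0 : u 0 = 1)
    (N : ℕ) (x : ℝ) :
    ∏ t ∈ range N, digitPoly d u (x ^ d ^ t) = ∑ n ∈ range (d ^ N), digitProd d u n * x ^ n := by
  induction N generalizing x with
  | zero => simp [digitProd]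
  | succ N ih =>
    have hshift : ∀ t, x ^ d ^ (t + 1) = (x ^ d) ^ d ^ t := fun t => by rw [pow_succ', pow_mul]
    rw [prod_range_succ', pow_succ' d N, sum_range_mul_eq_sum_sum]
    simp only [hshift]
    rw [ih, pow_zero, pow_one, digitPoly, sum_mul_sum]
    refine sum_congr rfl fun q _ => sum_congr rfl fun i hi => ?_
    rw [digitProd_add_mul hd hu0 (mem_range.1 hi), pow_add, pow_mul]
    ring

theorem abs_digitPoly_sub_one_le {d : ℕ} (hd : 0 < d) {u : ℕ → ℝ} (hu0 : u 0 = 1) {U : ℝ}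
    (hU : ∀ i < d, |u i| ≤ U) {x : ℝ} (hx : |x| ≤ 1) :
    |digitPoly d u x - 1| ≤ d * U * |x| := by
  obtain ⟨e, rfl⟩ : ∃ e, d = e + 1 := ⟨d - 1, by omega⟩
  have hU0 : 0 ≤ U := (abs_nonneg _).trans (hU 0 hd)
  have hterm : ∀ i ∈ range e, |u (i + 1) * x ^ (i + 1)| ≤ U * |x| := fun i hi => by
    rw [abs_mul, abs_pow]
    exact mul_le_mul (hU _ (by simpa using hi)) (pow_le_of_le_one (abs_nonneg x) hx i.succ_ne_zero)
      (by positivity) hU0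
  calc |digitPoly (e + 1) u x - 1| = |∑ i ∈ range e, u (i + 1) * x ^ (i + 1)| := by
        rw [digitPoly, sum_range_succ', pow_zero, hu0, mul_one, add_sub_cancel_right]
    _ ≤ e * (U * |x|) := by
        simpa using (abs_sum_le_sum_abs _ _).trans (sum_le_sum hterm)
    _ ≤ (e + 1 : ℕ) * U * |x| := by
        rw [← mul_assoc]
        gcongr
        exact e.le_succ

theorem multipliable_digitPoly_pow {d : ℕ} (hd : 1 < d) {u : ℕ → ℝ} (hu0 : u 0 = 1) {x : ℝ}
    (hx : |x| < 1) : Multipliable fun t : ℕ => digitPoly d u (x ^ d ^ t) := by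
  obtain ⟨U, hU⟩ : ∃ U, ∀ i < d, |u i| ≤ U :=
    ⟨∑ i ∈ range d, |u i|, fun i hi =>
      single_le_sum (f := fun i => |u i|) (fun _ _ => abs_nonneg _) (mem_range.2 hi)⟩
  have hU0 : 0 ≤ U := (abs_nonneg _).trans (hU 0 (by omega))
  have hsummable : Summable fun t : ℕ => digitPoly d u (x ^ d ^ t) - 1 := by
    refine ((summable_geometric_of_lt_one (abs_nonneg x) hx).mul_left (d * U)).of_norm_bounded
      fun t => ?_
    refine (abs_digitPoly_sub_one_le (by omega) hu0 hU ?_).trans ?_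
    · exact (abs_pow x _).trans_le (pow_le_one₀ (abs_nonneg x) hx.le)
    · rw [abs_pow]
      gcongr 1
      exact pow_le_pow_of_le_one (abs_nonneg x) hx.le (Nat.lt_pow_self hd).le
  simpa using Real.multipliable_one_add_of_summable hsummable

theorem mahlerProduct_eq_tsum_digitProd {d : ℕ} (hd : 1 < d) {u : ℕ → ℝ} (hu0 : u 0 = 1) {U : ℝ}
    (hU : ∀ i < d, |u i| ≤ U) {x : ℝ} (hUx : U * |x| < 1) :
    mahlerProduct d u x = ∑' n, digitProd d u n * x ^ n := by
  have hU1 : 1 ≤ U := by simpa [hu0] using hU 0 (by omega)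
  have hx : |x| < 1 := by nlinarith [abs_nonneg x]
  have hprod := (multipliable_digitPoly_pow hd hu0 hx).tendsto_prod_tprod_nat
  have hsum := (summable_digitProd_mul_pow hd hU1 hU hUx).tendsto_sum_tsum_nat.comp
    (tendsto_pow_atTop_atTop_of_one_lt hd)
  exact tendsto_nhds_unique hprod
    (hsum.congr fun N => (prod_digitPoly_pow_eq_sum_digitProd hd hu0 N x).symm)

theorem mahlerProduct_eq_prod_mul {d : ℕ} (hd : 1 < d) {u : ℕ → ℝ} (hu0 : u 0 = 1) {x : ℝ}
    (hx : |x| < 1) (m : ℕ) :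
    mahlerProduct d u x =
      (∏ t ∈ range m, digitPoly d u (x ^ d ^ t)) * mahlerProduct d u (x ^ d ^ m) := by
  have hshift : ∀ t, x ^ d ^ (t + m) = (x ^ d ^ m) ^ d ^ t := fun t => by
    rw [← pow_mul, ← pow_add, add_comm]
  have hxm : |x ^ d ^ m| < 1 := by
    rw [abs_pow]
    exact pow_lt_one₀ (abs_nonneg x) hx (by positivity)
  have htail : Multipliable fun t => digitPoly d u (x ^ d ^ (t + m)) := by
    simpa only [hshift] using multipliable_digitPoly_pow hd hu0 hxm
  simpa only [hshift, mahlerProduct] using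
    (Multipliable.prod_mul_tprod_nat_mul' (f := fun t => digitPoly d u (x ^ d ^ t)) htail).symm

theorem reverseDigitPoly_eq_pow_mul (d : ℕ) (u : ℕ → ℝ) {x : ℝ} (hx : x ≠ 0) :
    reverseDigitPoly d u x = x ^ (d - 1) * digitPoly d u x⁻¹ := by
  rw [reverseDigitPoly, digitPoly, mul_sum]
  refine sum_congr rfl fun i hi => ?_
  have hi : i ≤ d - 1 := by have := mem_range.1 hi; omega
  rw [pow_sub₀ x hx hi, inv_pow]
  ring

theorem prod_pow_pow_sub_one_mul {M : Type*} [CommMonoid M] {d : ℕ} (hd : 0 < d) (x : M) (m : ℕ) :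
    (∏ t ∈ range m, (x ^ d ^ t) ^ (d - 1)) * x = x ^ d ^ m := by
  induction m with
  | zero => simp
  | succ m ih =>
    rw [prod_range_succ, mul_right_comm, ih, ← pow_succ', Nat.sub_add_cancel hd, ← pow_mul,
      pow_succ]

theorem mahlerG_eq_prod_reverseDigitPoly_mul {d b : ℕ} (hd : 1 < d) (hb : 1 < b) {u : ℕ → ℤ}
    (hu0 : u 0 = 1) (m : ℕ) :
    mahlerG d b u = (∏ t ∈ range m, reverseDigitPoly d (fun i => u i) ((b : ℝ) ^ d ^ t)) *
      (((b : ℝ) ^ d ^ m)⁻¹ * mahlerProduct d (fun i => u i) ((b : ℝ) ^ d ^ m)⁻¹) := by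
  have hb1 : (1 : ℝ) < b := by exact_mod_cast hb
  have hb0 : (b : ℝ) ≠ 0 := by positivity
  have hbinv : |(b : ℝ)⁻¹| < 1 := by
    rw [abs_inv, Nat.abs_cast]
    exact inv_lt_one_of_one_lt₀ hb1
  have hpow := prod_pow_pow_sub_one_mul (by omega : 0 < d) (b : ℝ) m
  have hG : mahlerG d b u = (b : ℝ)⁻¹ * mahlerProduct d (fun i => u i) (b : ℝ)⁻¹ := rfl
  rw [hG, mahlerProduct_eq_prod_mul hd (by simp [hu0]) hbinv m]
  simp only [reverseDigitPoly_eq_pow_mul d _ (pow_ne_zero _ hb0), prod_mul_distrib, ← hpow,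
    inv_pow]
  field_simp

theorem abs_sum_range_succ_mul_pow_le {n : ℕ} {a : ℕ → ℝ} {H x : ℝ} (ha : ∀ j ≤ n, |a j| ≤ H)
    (hx : 2 ≤ x) : |∑ j ∈ range (n + 1), a j * x ^ j| ≤ 2 * H * x ^ n := by
  have hH0 : 0 ≤ H := (abs_nonneg _).trans (ha 0 n.zero_le)
  have hgeom : ∑ j ∈ range (n + 1), x ^ j ≤ 2 * x ^ n := by
    have hsum := geom_sum_mul x (n + 1)
    have hS : 0 ≤ ∑ j ∈ range (n + 1), x ^ j := sum_nonneg fun j _ => by positivity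
    have hxn : 0 < x ^ n := by positivity
    rw [pow_succ] at hsum
    nlinarith
  calc |∑ j ∈ range (n + 1), a j * x ^ j| ≤ ∑ j ∈ range (n + 1), H * x ^ j := by
        refine (abs_sum_le_sum_abs _ _).trans (sum_le_sum fun j hj => ?_)
        rw [abs_mul, abs_of_nonneg (by positivity : 0 ≤ x ^ j)]
        gcongr
        exact ha j (mem_range_succ_iff.1 hj)
    _ ≤ 2 * H * x ^ n := by
        rw [← mul_sum, mul_comm 2 H, mul_assoc]
        gcongr

theorem abs_reverseDigitPoly_le {d : ℕ} (hd : 0 < d) {u : ℕ → ℝ} {U : ℝ}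
    (hU : ∀ i < d, |u i| ≤ U) {x : ℝ} (hx : 2 ≤ x) :
    |reverseDigitPoly d u x| ≤ 2 * U * x ^ (d - 1) := by
  obtain ⟨e, rfl⟩ : ∃ e, d = e + 1 := ⟨d - 1, by omega⟩
  have hreflect : reverseDigitPoly (e + 1) u x = ∑ j ∈ range (e + 1), u (e - j) * x ^ j := by
    rw [reverseDigitPoly, ← sum_range_reflect]
    refine sum_congr rfl fun j hj => ?_
    have := mem_range.1 hj
    rw [show e + 1 - 1 - j = e - j by omega, show e + 1 - 1 - (e - j) = j by omega]
  rw [hreflect]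
  exact abs_sum_range_succ_mul_pow_le (fun j _ => hU _ (by omega)) hx

theorem abs_prod_reverseDigitPoly_mul_le {d : ℕ} (hd : 0 < d) {u : ℕ → ℝ} {U : ℝ}
    (hU : ∀ i < d, |u i| ≤ U) {x : ℝ} (hx : 2 ≤ x) (m : ℕ) :
    |∏ t ∈ range m, reverseDigitPoly d u (x ^ d ^ t)| * x ≤ (2 * U) ^ m * x ^ d ^ m := by
  have hfactor : ∀ t ∈ range m,
      |reverseDigitPoly d u (x ^ d ^ t)| ≤ 2 * U * (x ^ d ^ t) ^ (d - 1) := fun t _ =>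
    abs_reverseDigitPoly_le hd hU (hx.trans (le_self_pow₀ (by linarith) (by positivity)))
  calc |∏ t ∈ range m, reverseDigitPoly d u (x ^ d ^ t)| * x
      ≤ (∏ t ∈ range m, 2 * U * (x ^ d ^ t) ^ (d - 1)) * x := by
        rw [abs_prod]
        gcongr with t ht
        exact hfactor t ht
    _ = (2 * U) ^ m * x ^ d ^ m := by
        rw [prod_mul_distrib, prod_const, card_range, mul_assoc, prod_pow_pow_sub_one_mul hd]

end MahlerProduct

section Pade

open Finset

/-- The coefficient of `z ^ i` in the polynomial part of `(∑ a_j z ^ j) (∑ w_n z ^ (-n - 1))`,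
where `j ≤ k`. -/
def padeNumeratorCoeff (k : ℕ) (a w : ℕ → ℝ) (i : ℕ) : ℝ :=
  ∑ j ∈ Icc (i + 1) k, a j * w (j - i - 1)

theorem pow_mul_tsum_div_pow_succ {w : ℕ → ℝ} {z : ℝ} (hz : z ≠ 0)
    (hs : Summable fun n => w n / z ^ (n + 1)) (j : ℕ) :
    z ^ j * ∑' n, w n / z ^ (n + 1) =
      ∑ i ∈ range j, w (j - i - 1) * z ^ i + ∑' i, w (i + j) / z ^ (i + 1) := by
  rw [← hs.sum_add_tsum_nat_add j, mul_add, ← tsum_mul_left, ← sum_range_reflect, mul_sum]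
  congr 1
  · refine sum_congr rfl fun i hi => ?_
    have hji : j = i + (j - i - 1 + 1) := by have := mem_range.1 hi; omega
    rw [show j - 1 - i = j - i - 1 by omega]
    nth_rw 1 [hji]
    rw [pow_add]
    field_simp
  · refine tsum_congr fun i => ?_
    rw [add_right_comm, pow_add _ (i + 1)]
    field_simp

theorem sum_padeNumeratorCoeff_mul_pow (k : ℕ) (a w : ℕ → ℝ) (z : ℝ) :
    ∑ i ∈ range k, padeNumeratorCoeff k a w i * z ^ i =
      ∑ j ∈ range (k + 1), a j * ∑ i ∈ range j, w (j - i - 1) * z ^ i := by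
  simp only [padeNumeratorCoeff, sum_mul, mul_sum, mul_assoc]
  refine sum_comm' fun i j => ?_
  simp only [mem_range, mem_Icc]
  omega

theorem polynomial_mul_tsum_div_pow_succ {w : ℕ → ℝ} {z : ℝ} (hz : z ≠ 0)
    (hs : Summable fun n => w n / z ^ (n + 1)) (k : ℕ) (a : ℕ → ℝ) :
    (∑ j ∈ range (k + 1), a j * z ^ j) * ∑' n, w n / z ^ (n + 1) =
      ∑ i ∈ range k, padeNumeratorCoeff k a w i * z ^ i +
        ∑' i, (∑ j ∈ range (k + 1), a j * w (i + j)) / z ^ (i + 1) := by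
  have hshift : ∀ j, Summable fun i => w (i + j) / z ^ (i + 1) := fun j => by
    refine (((summable_nat_add_iff j).2 hs).mul_left (z ^ j)).congr fun i => ?_
    rw [add_right_comm, pow_add _ (i + 1)]
    field_simp
  have htail : ∑' i, (∑ j ∈ range (k + 1), a j * w (i + j)) / z ^ (i + 1) =
      ∑ j ∈ range (k + 1), a j * ∑' i, w (i + j) / z ^ (i + 1) := by
    simp only [sum_div, mul_div_assoc]
    rw [Summable.tsum_finsetSum fun j _ => (hshift j).mul_left (a j)]
    simp only [tsum_mul_left]
  rw [sum_padeNumeratorCoeff_mul_pow, htail, ← sum_add_distrib, sum_mul]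
  refine sum_congr rfl fun j _ => ?_
  rw [mul_assoc, pow_mul_tsum_div_pow_succ hz hs, mul_add]

theorem abs_tsum_div_pow_succ_le {r : ℕ → ℝ} {k : ℕ} {C U z : ℝ} (hU : 0 ≤ U) (hz : 0 < z)
    (hUz : 2 * U ≤ z) (hzero : ∀ i < k, r i = 0) (hbound : ∀ s, |r (s + k)| ≤ C * U ^ s) :
    |∑' i, r i / z ^ (i + 1)| ≤ 2 * C / z ^ (k + 1) := by
  have hratio : U / z ≤ 1 / 2 := by rw [div_le_div_iff₀ hz two_pos]; linarith
  have hC : 0 ≤ C := by simpa using (abs_nonneg _).trans (hbound 0)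
  have hgeom := (hasSum_geometric_of_lt_one (by positivity : 0 ≤ U / z)
    (by linarith)).mul_left (C / z ^ (k + 1))
  have hterm : ∀ s, ‖r (s + k) / z ^ (s + k + 1)‖ ≤ C / z ^ (k + 1) * (U / z) ^ s := fun s => by
    rw [Real.norm_eq_abs, abs_div, abs_of_pos (by positivity : 0 < z ^ (s + k + 1)), div_pow,
      div_mul_div_comm, ← pow_add, show k + 1 + s = s + k + 1 by omega]
    gcongr
    exact hbound s
  have hsummable : Summable fun i => r i / z ^ (i + 1) :=
    (summable_nat_add_iff k).1 (hgeom.summable.of_norm_bounded hterm)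
  have hhead : ∑ i ∈ range k, r i / z ^ (i + 1) = 0 :=
    sum_eq_zero fun i hi => by rw [hzero i (mem_range.1 hi), zero_div]
  rw [← hsummable.sum_add_tsum_nat_add k, hhead, zero_add]
  calc |∑' s, r (s + k) / z ^ (s + k + 1)| ≤ C / z ^ (k + 1) * (1 - U / z)⁻¹ :=
        tsum_of_norm_bounded hgeom hterm
    _ ≤ C / z ^ (k + 1) * 2 := by
        gcongr
        rw [inv_le_comm₀ (by linarith) two_pos]
        linarith
    _ = 2 * C / z ^ (k + 1) := by ring

theorem abs_denominator_mul_sub_numerator_le {k : ℕ} {a w : ℕ → ℝ} {H U V z : ℝ} (hU : 0 ≤ U)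
    (hz : 0 < z) (hUz : 2 * U ≤ z) (hs : Summable fun n => w n / z ^ (n + 1))
    (ha : ∀ j ≤ k, |a j| ≤ H) (hw : ∀ n s, n ≤ 2 * k + s → |w n| ≤ V * U ^ s)
    (hvan : ∀ i < k, ∑ j ∈ range (k + 1), a j * w (i + j) = 0) :
    |(∑ j ∈ range (k + 1), a j * z ^ j) * ∑' n, w n / z ^ (n + 1) -
        ∑ i ∈ range k, padeNumeratorCoeff k a w i * z ^ i| ≤
      2 * ((k + 1) * H * V) / z ^ (k + 1) := by
  have hH : 0 ≤ H := (abs_nonneg _).trans (ha 0 k.zero_le)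
  rw [polynomial_mul_tsum_div_pow_succ hz.ne' hs, add_sub_cancel_left]
  refine abs_tsum_div_pow_succ_le hU hz hUz hvan fun s => ?_
  calc |∑ j ∈ range (k + 1), a j * w (s + k + j)|
      ≤ ∑ _j ∈ range (k + 1), H * (V * U ^ s) := by
        refine (abs_sum_le_sum_abs _ _).trans (sum_le_sum fun j hj => ?_)
        have hj : j ≤ k := mem_range_succ_iff.1 hj
        rw [abs_mul]
        exact mul_le_mul (ha j hj) (hw _ s (by omega)) (abs_nonneg _) hH
    _ = (k + 1) * H * V * U ^ s := by
        rw [sum_const, card_range, nsmul_eq_mul]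
        push_cast
        ring

theorem pow_div_two_le_abs_sum_range_succ {k : ℕ} {a : ℕ → ℝ} {H z : ℝ} (hak : 1 ≤ |a k|)
    (ha : ∀ j ≤ k, |a j| ≤ H) (hz : 2 ≤ z) (hHz : 4 * H ≤ z) :
    z ^ k / 2 ≤ |∑ j ∈ range (k + 1), a j * z ^ j| := by
  have hzk : 0 < z ^ k := by positivity
  have hlower : |∑ j ∈ range k, a j * z ^ j| ≤ z ^ k / 2 := by
    rcases k with - | k
    · simp
    calc |∑ j ∈ range (k + 1), a j * z ^ j| ≤ 2 * H * z ^ k :=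
          abs_sum_range_succ_mul_pow_le (fun j hj => ha j (by omega)) hz
      _ ≤ z / 2 * z ^ k := by gcongr; linarith
      _ = z ^ (k + 1) / 2 := by ring
  have hlead : z ^ k ≤ |a k * z ^ k| := by
    rw [abs_mul, abs_of_pos hzk]
    exact le_mul_of_one_le_left hzk.le hak
  have htriangle := abs_sub_abs_le_abs_add (a k * z ^ k) (∑ j ∈ range k, a j * z ^ j)
  rw [sum_range_succ, add_comm]
  linarith

end Pade

section ApproximationError

open Finset

theorem hasSum_digitProd_div_pow_succ {d : ℕ} (hd : 1 < d) {u : ℕ → ℝ} (hu0 : u 0 = 1) {U : ℝ}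
    (hU : ∀ i < d, |u i| ≤ U) {z : ℝ} (hz : U < |z|) :
    HasSum (fun n => digitProd d u n / z ^ (n + 1)) (z⁻¹ * mahlerProduct d u z⁻¹) := by
  have hU1 : 1 ≤ U := by simpa [hu0] using hU 0 (by omega)
  have hUz : U * |z⁻¹| < 1 := by
    rw [abs_inv, ← div_eq_mul_inv, div_lt_one (by linarith)]
    exact hz
  rw [mahlerProduct_eq_tsum_digitProd hd hu0 hU hUz]
  refine ((summable_digitProd_mul_pow hd hU1 hU hUz).hasSum.mul_left z⁻¹).congr_fun fun n => ?_
  rw [inv_pow, pow_succ]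
  ring

theorem abs_polynomial_mul_mahlerProduct_sub_le {d k : ℕ} (hd : 1 < d) {u : ℕ → ℝ} (hu0 : u 0 = 1)
    {U : ℝ} (hU : ∀ i < d, |u i| ≤ U) {a : ℕ → ℝ} {H z : ℝ} (ha : ∀ j ≤ k, |a j| ≤ H)
    (hvan : ∀ i < k, ∑ j ∈ range (k + 1), a j * digitProd d u (i + j) = 0) (hUz : 2 * U ≤ z) :
    |(∑ j ∈ range (k + 1), a j * z ^ j) * (z⁻¹ * mahlerProduct d u z⁻¹) -
        ∑ i ∈ range k, padeNumeratorCoeff k a (digitProd d u) i * z ^ i| ≤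
      2 * ((k + 1) * H * U ^ (Real.logb d (2 * k + 1) + 1)) / z ^ (k + 1) := by
  have hU1 : 1 ≤ U := by simpa [hu0] using hU 0 (by omega)
  have hseries := hasSum_digitProd_div_pow_succ hd hu0 hU (z := z)
    (by rw [abs_of_nonneg] <;> linarith)
  have hcoeff : ∀ n s, n ≤ 2 * k + s →
      |digitProd d u n| ≤ U ^ (Real.logb d (2 * k + 1) + 1) * U ^ s := fun n s hn => by
    refine abs_digitProd_le_rpow_mul_pow hd hU1 hU (by linarith [k.cast_nonneg (α := ℝ)]) ?_
    have : s < d ^ s := Nat.lt_pow_self hd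
    have : n ≤ (2 * k + 1) * d ^ s := by nlinarith
    exact_mod_cast this
  rw [← hseries.tsum_eq]
  exact abs_denominator_mul_sub_numerator_le (by linarith) (by linarith) hUz hseries.summable ha
    hcoeff hvan

theorem pow_div_two_le_abs_mahlerQkm {d b k m : ℕ} (hd : 0 < d) (hb : 2 ≤ b) {a : ℕ → ℤ}
    (hak : a k ≠ 0) {H : ℝ} (ha : ∀ j ≤ k, |(a j : ℝ)| ≤ H) (hH : 4 * H ≤ (b : ℝ) ^ d ^ m) :
    ((b : ℝ) ^ d ^ m) ^ k / 2 ≤ |mahlerQkm d b k m a| := by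
  have hb2 : (2 : ℝ) ≤ b := by exact_mod_cast hb
  exact pow_div_two_le_abs_sum_range_succ (a := fun j => (a j : ℝ))
    (by exact_mod_cast Int.one_le_abs hak) ha
    (hb2.trans (le_self_pow₀ (by linarith) (by positivity))) hH

theorem mahlerPkm_eq_prod_mul_sum {d b k m : ℕ} {u a bc : ℕ → ℤ}
    (hbc : ∀ i < k, bc i = ∑ j ∈ Icc (i + 1) k, a j * digitProd d u (j - i - 1)) :
    mahlerPkm d b k m u bc =
      (∏ t ∈ range m, reverseDigitPoly d (fun i => u i) ((b : ℝ) ^ d ^ t)) *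
        ∑ i ∈ range k, padeNumeratorCoeff k (fun j => a j) (digitProd d fun i => (u i : ℝ)) i *
          ((b : ℝ) ^ d ^ m) ^ i := by
  have hcoeff : ∀ i < k, (bc i : ℝ) =
      padeNumeratorCoeff k (fun j => a j) (digitProd d fun i => (u i : ℝ)) i := fun i hi => by
    rw [hbc i hi, padeNumeratorCoeff]
    push_cast [intCast_digitProd]
    rfl
  rw [mahlerPkm, sum_congr rfl fun i hi => by rw [hcoeff i (mem_range.1 hi)]]
  rfl

theorem abs_mul_sub_div_le {P f p q B C D E : ℝ} {k : ℕ} (hB : 0 < B) (hC : 0 ≤ C) (hE : 0 ≤ E)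
    (hq : q ≠ 0) (hP : |P| * 2 ≤ E * B) (hqB : |q| ≤ 2 * D * B ^ k)
    (hrem : |q * f - p| ≤ 2 * C / B ^ (k + 1)) :
    |P * (f - p / q)| ≤ 2 * (E * C * D) / q ^ 2 := by
  have hdiv : |f - p / q| = |q * f - p| / |q| := by
    rw [← abs_div, sub_div, mul_div_cancel_left₀ f hq]
  calc |P * (f - p / q)| = |P| * |q * f - p| / |q| := by rw [abs_mul, hdiv, mul_div_assoc]
    _ ≤ |P| * (2 * C / B ^ (k + 1)) / |q| := by gcongr
    _ = |P| * 2 * C * |q| / (B ^ (k + 1) * q ^ 2) := by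
        rw [← sq_abs q]
        field_simp
    _ ≤ E * B * C * (2 * D * B ^ k) / (B ^ (k + 1) * q ^ 2) := by gcongr
    _ = 2 * (E * C * D) / q ^ 2 := by
        rw [pow_succ B k]
        field_simp

/-- The constant `C` in `|g(b) - p_{k,m} / q_{k,m}| ≤ 2 C / q_{k,m} ^ 2`. Here `U` bounds the
coefficients of `P`, `H` those of `q_k`, and `L` stands for `log_d (2 k + 1)`. -/
noncomputable def errorConstant (k m : ℕ) (L U H : ℝ) : ℝ :=
  (2 * U) ^ m * (k + 1) * H ^ 2 * U ^ (L + 1)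

theorem abs_mahlerG_sub_div_le {d b k m : ℕ} (hd : 1 < d) (hb : 2 ≤ b) {u : ℕ → ℤ}
    (hu0 : u 0 = 1) {U : ℝ} (hU : ∀ i < d, |(u i : ℝ)| ≤ U) {a bc : ℕ → ℤ} (hak : a k ≠ 0)
    (hvan : ∀ i < k, ∑ j ∈ range (k + 1), a j * digitProd d u (i + j) = 0)
    (hbc : ∀ i < k, bc i = ∑ j ∈ Icc (i + 1) k, a j * digitProd d u (j - i - 1))
    {H : ℝ} (ha : ∀ j ≤ k, |(a j : ℝ)| ≤ H) (hH : 4 * H ≤ (b : ℝ) ^ d ^ m)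
    (hUb : 2 * U ≤ (b : ℝ) ^ d ^ m) :
    |mahlerG d b u - mahlerPkm d b k m u bc / mahlerQkm d b k m a| ≤
      2 * errorConstant k m (Real.logb d (2 * k + 1)) U H / mahlerQkm d b k m a ^ 2 := by
  have hb2 : (2 : ℝ) ≤ b := by exact_mod_cast hb
  have hU0 : 0 ≤ U := (abs_nonneg _).trans (hU 0 (by omega))
  have hH0 : 0 ≤ H := (abs_nonneg _).trans (ha 0 k.zero_le)
  have hq : mahlerQkm d b k m a ≠ 0 := abs_pos.1 <|
    lt_of_lt_of_le (by positivity) (pow_div_two_le_abs_mahlerQkm (by omega) hb hak ha hH)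
  have hvan' : ∀ i < k, ∑ j ∈ range (k + 1),
      (a j : ℝ) * digitProd d (fun i => (u i : ℝ)) (i + j) = 0 := fun i hi => by
    simp only [← intCast_digitProd]
    exact_mod_cast hvan i hi
  have hrem := abs_polynomial_mul_mahlerProduct_sub_le (u := fun i => u i) (a := fun j => a j) hd
    (by simp [hu0]) hU ha hvan' hUb
  have hprod := abs_prod_reverseDigitPoly_mul_le (by omega : 0 < d) hU hb2 m
  have hqup : |mahlerQkm d b k m a| ≤ 2 * H * ((b : ℝ) ^ d ^ m) ^ k :=
    abs_sum_range_succ_mul_pow_le (a := fun j => (a j : ℝ)) ha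
      (hb2.trans (le_self_pow₀ (by linarith) (by positivity)))
  rw [mahlerG_eq_prod_reverseDigitPoly_mul hd hb hu0 m, mahlerPkm_eq_prod_mul_sum hbc,
    mul_div_assoc, ← mul_sub]
  refine (abs_mul_sub_div_le (by positivity) (by positivity) (by positivity) hq
    ((mul_le_mul_of_nonneg_left hb2 (abs_nonneg _)).trans hprod) hqup hrem).trans_eq ?_
  rw [errorConstant]
  ring

end ApproximationError

section LogarithmicBounds

theorem sq_le_of_three_mul_add_sq_mul_logb_le {k : ℕ} (hk : 1 ≤ k) {Q : ℝ}
    (hQ : 3 * k + k ^ 2 / 2 * Real.logb 2 k ≤ Q + 1) : (k : ℝ) ^ 2 ≤ Q := by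
  have hlog : ∀ n : ℕ, 2 ^ n ≤ k → (n : ℝ) ≤ Real.logb 2 k := fun n hn => by
    rw [Real.le_logb_iff_rpow_le one_lt_two (by positivity), Real.rpow_natCast]
    exact_mod_cast hn
  rcases le_or_gt 4 k with h4 | h4
  · have hk4 : (4 : ℝ) ≤ k := by exact_mod_cast h4
    have h2 : (2 : ℝ) ≤ Real.logb 2 k := by exact_mod_cast hlog 2 (by omega)
    nlinarith
  · interval_cases k
    · norm_num at hQ ⊢
      linarith
    · norm_num at hQ ⊢
      linarith
    · have := hlog 1 (by omega)
      norm_num at this hQ ⊢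
      linarith

theorem mul_logb_two_le_of_mul_log_sq_le {m U Q : ℝ}
    (h : 1 / 3 * m ^ 2 * Real.log U ^ 2 ≤ Q) : m * Real.logb 2 U ≤ 5 / 2 * √Q := by
  have hQ : 0 ≤ Q := le_trans (by positivity) h
  have hlog2 : (0.48 : ℝ) ≤ Real.log 2 ^ 2 := by nlinarith [Real.log_two_gt_d9]
  have hlogU : Real.log U = Real.logb 2 U * Real.log 2 :=
    (div_mul_cancel₀ _ (by positivity)).symm
  refine (abs_le_of_sq_le_sq' ?_ (by positivity)).2
  rw [mul_pow (5 / 2), Real.sq_sqrt hQ]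
  rw [hlogU] at h
  nlinarith [mul_le_mul_of_nonneg_left hlog2 (sq_nonneg (m * Real.logb 2 U))]

theorem natCast_mul_logb_le_sqrt {k : ℕ} (hk : 1 ≤ k) {Q : ℝ}
    (hQ : 3 * k + k ^ 2 / 2 * Real.logb 2 k ≤ Q + 1) :
    k * Real.logb 2 k ≤ √(Q * Real.logb 2 Q) := by
  have hk1 : (1 : ℝ) ≤ k := by exact_mod_cast hk
  have hsq := sq_le_of_three_mul_add_sq_mul_logb_le hk hQ
  have hlog : 0 ≤ Real.logb 2 k := Real.logb_nonneg one_lt_two hk1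
  have hlogQ : 2 * Real.logb 2 k ≤ Real.logb 2 Q := by
    calc 2 * Real.logb 2 k = Real.logb 2 (k ^ 2) := by rw [Real.logb_pow, Nat.cast_ofNat]
      _ ≤ Real.logb 2 Q := Real.logb_le_logb_of_le one_lt_two (by positivity) hsq
  refine Real.le_sqrt_of_sq_le ?_
  calc (k * Real.logb 2 k) ^ 2 = k ^ 2 / 2 * Real.logb 2 k * (2 * Real.logb 2 k) := by ring
    _ ≤ Q * Real.logb 2 Q := by
        gcongr
        · nlinarith
        · linarith

theorem logb_two_le_self {x : ℝ} (hx : 1 ≤ x) : Real.logb 2 x ≤ x := by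
  rw [Real.logb_le_iff_le_rpow one_lt_two (by linarith)]
  have hbernoulli := one_add_mul_self_le_rpow_one_add (s := 1) (by norm_num) hx
  norm_num at hbernoulli
  linarith

theorem logb_two_le_sqrt_mul_logb {x : ℝ} (hx : 1 ≤ x) :
    Real.logb 2 x ≤ √(x * Real.logb 2 x) := by
  refine Real.le_sqrt_of_sq_le ?_
  rw [sq]
  exact mul_le_mul_of_nonneg_right (logb_two_le_self hx) (Real.logb_nonneg one_lt_two hx)

theorem natCast_add_logb_add_mul_logb_add_le {k m : ℕ} (hk : 2 ≤ k) {Q : ℝ}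
    (hQ : 3 * k + k ^ 2 / 2 * Real.logb 2 k ≤ Q + 1) (hm : k * (2 : ℝ) ^ m ≤ Q + 1) :
    m + Real.logb 2 (k + 1) + k * Real.logb 2 k + 5 / 2 * √Q ≤
      (2 * √2 + 2) * √(Q * Real.logb 2 Q) := by
  have hk2 : (2 : ℝ) ≤ k := by exact_mod_cast hk
  have hlogk : 0 ≤ Real.logb 2 k := Real.logb_nonneg one_lt_two (by linarith)
  have hQk : 3 * k - 1 ≤ Q := by nlinarith [mul_nonneg (sq_nonneg (k : ℝ)) hlogk]
  have hlogQ : 2 ≤ Real.logb 2 Q := by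
    rw [Real.le_logb_iff_rpow_le one_lt_two (by linarith)]
    norm_num
    linarith
  have hlogQS := logb_two_le_sqrt_mul_logb (by linarith : 1 ≤ Q)
  have hmQ : m ≤ Real.logb 2 Q := by
    rw [Real.le_logb_iff_rpow_le one_lt_two (by linarith), Real.rpow_natCast]
    nlinarith [one_le_pow₀ (M₀ := ℝ) one_le_two (n := m)]
  have hk1Q : Real.logb 2 (k + 1) ≤ Real.logb 2 Q :=
    Real.logb_le_logb_of_le one_lt_two (by linarith) (by linarith)
  have hsqrtQ : 5 / 2 * √Q ≤ 9 / 5 * √(Q * Real.logb 2 Q) := by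
    refine (abs_le_of_sq_le_sq' ?_ (by positivity)).2
    rw [mul_pow, mul_pow, Real.sq_sqrt (by linarith),
      Real.sq_sqrt (mul_nonneg (by linarith) (by linarith))]
    nlinarith
  have hsqrt2 : 7 / 5 ≤ √2 := Real.le_sqrt_of_sq_le (by norm_num)
  -- The four terms cost `1 + 1 + 1 + 9 / 5` square roots, which is `2 * (7 / 5) + 2`.
  nlinarith [natCast_mul_logb_le_sqrt (by omega) hQ, Real.sqrt_nonneg (Q * Real.logb 2 Q)]

/-- For `k = 1` the number `m` can exceed `log₂ Q`, since then only `2 ^ m ≤ Q + 1` is known. -/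
theorem natCast_add_one_add_sqrt_le {m : ℕ} {Q : ℝ} (hQ : 2 ≤ Q) (hm : (2 : ℝ) ^ m ≤ Q + 1) :
    m + 1 + 5 / 2 * √Q ≤ (2 * √2 + 2) * √(Q * Real.logb 2 Q) := by
  have hlogQ : 1 ≤ Real.logb 2 Q := by
    rwa [Real.le_logb_iff_rpow_le one_lt_two (by linarith), Real.rpow_one]
  have hlogQS := logb_two_le_sqrt_mul_logb (by linarith : 1 ≤ Q)
  have hlog32 : Real.logb 2 (3 / 2) ≤ 3 / 5 := by
    have h5 : 5 * Real.logb 2 (3 / 2) ≤ 3 := by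
      rw [← Nat.cast_ofNat (n := 5), ← Real.logb_pow,
        Real.logb_le_iff_le_rpow one_lt_two (by norm_num)]
      norm_num
    linarith
  have hmQ : m ≤ Real.logb 2 Q + 3 / 5 := by
    calc (m : ℝ) ≤ Real.logb 2 (Q * (3 / 2)) := by
          rw [Real.le_logb_iff_rpow_le one_lt_two (by linarith), Real.rpow_natCast]
          linarith
      _ = Real.logb 2 Q + Real.logb 2 (3 / 2) := Real.logb_mul (by linarith) (by norm_num)
      _ ≤ Real.logb 2 Q + 3 / 5 := by gcongr
  have hsqrtQ : √Q ≤ √(Q * Real.logb 2 Q) :=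
    Real.sqrt_le_sqrt (le_mul_of_one_le_right (by linarith) hlogQ)
  have hS : 7 / 5 ≤ √(Q * Real.logb 2 Q) := Real.le_sqrt_of_sq_le (by nlinarith)
  have hsqrt2 : 7 / 5 ≤ √2 := Real.le_sqrt_of_sq_le (by norm_num)
  nlinarith

theorem two_mul_add_one_mul_logb_le {k : ℕ} (hk : 1 ≤ k) {L U Q : ℝ} (hU : 1 ≤ U) (hL0 : 0 ≤ L)
    (hL : L ≤ Real.logb 2 (2 * k + 1)) (hkQ : 3 * k ≤ Q + 1)
    (hQ : k * (k + 1) * (L + 1) * Real.logb 2 U ≤ Q) :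
    (2 * k + 1) * (L + 1) * Real.logb 2 U ≤ 2 * √(5 * Real.log U) * √(Q * Real.logb 2 Q) := by
  have hk1 : (1 : ℝ) ≤ k := by exact_mod_cast hk
  have hlogU : Real.log U = Real.logb 2 U * Real.log 2 :=
    (div_mul_cancel₀ _ (by positivity)).symm
  have hlogU0 : 0 ≤ Real.log U := Real.log_nonneg hU
  have hlogbU0 : 0 ≤ Real.logb 2 U := Real.logb_nonneg one_lt_two hU
  have hlogQ0 : 0 ≤ Real.logb 2 Q := Real.logb_nonneg one_lt_two (by linarith)
  have hLQ : L + 1 ≤ 3 * Real.logb 2 Q := by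
    calc L + 1 ≤ Real.logb 2 (2 * k + 1) + Real.logb 2 2 := by
          rw [Real.logb_self_eq_one one_lt_two]
          gcongr
      _ = Real.logb 2 ((2 * k + 1) * 2) := (Real.logb_mul (by positivity) two_ne_zero).symm
      _ ≤ Real.logb 2 (Q ^ 3) := by
          refine Real.logb_le_logb_of_le one_lt_two (by positivity) ?_
          have hQ4 : 4 ≤ Q ^ 2 := by nlinarith
          nlinarith
      _ = 3 * Real.logb 2 Q := by rw [Real.logb_pow, Nat.cast_ofNat]
  refine (abs_le_of_sq_le_sq' ?_ (by positivity)).2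
  rw [mul_pow (2 * _), mul_pow 2, Real.sq_sqrt (by positivity),
    Real.sq_sqrt (mul_nonneg (by linarith) hlogQ0)]
  calc ((2 * k + 1) * (L + 1) * Real.logb 2 U) ^ 2
      = (2 * k + 1) ^ 2 * (L + 1) * Real.logb 2 U * ((L + 1) * Real.logb 2 U) := by ring
    _ ≤ 9 / 2 * (k * (k + 1)) * (L + 1) * Real.logb 2 U *
          (3 * Real.logb 2 Q * Real.logb 2 U) := by
        gcongr
        nlinarith
    _ = k * (k + 1) * (L + 1) * Real.logb 2 U * (27 / 2 * Real.logb 2 Q * Real.logb 2 U) := by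
        ring
    -- `27 / 2 ≤ 20 log 2`, which is why `5` suffices under the root in the exponent.
    _ ≤ Q * (20 * Real.log 2 * Real.logb 2 Q * Real.logb 2 U) := by
        gcongr
        · linarith
        · linarith [Real.log_two_gt_d9]
    _ = 2 ^ 2 * (5 * Real.log U) * (Q * Real.logb 2 Q) := by
        rw [hlogU]
        ring

/-- The bound `U ^ (k (L + 1)) k ^ (k / 2)` on the coefficients of the denominator `q_k`, where
`L` stands for `log_d (2 k + 1)`. It comes from Hadamard's inequality for the minors, of order at
most `k`, of the Hankel matrices of the sequence `c`. -/
noncomputable def hadamardBound (k : ℕ) (L U : ℝ) : ℝ :=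
  U ^ ((k : ℝ) * (L + 1)) * (k : ℝ) ^ ((k : ℝ) / 2)

theorem one_le_hadamardBound {k : ℕ} (hk : 1 ≤ k) {L U : ℝ} (hL : 0 ≤ L) (hU : 1 ≤ U) :
    1 ≤ hadamardBound k L U :=
  one_le_mul_of_one_le_of_one_le (Real.one_le_rpow hU (by positivity))
    (Real.one_le_rpow (by exact_mod_cast hk) (by positivity))

theorem logb_two_errorConstant {k : ℕ} (hk : 1 ≤ k) (m : ℕ) (L : ℝ) {U : ℝ} (hU : 0 < U) :
    Real.logb 2 (errorConstant k m L U (hadamardBound k L U)) =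
      m + Real.logb 2 (k + 1) + k * Real.logb 2 k + m * Real.logb 2 U +
        (2 * k + 1) * (L + 1) * Real.logb 2 U := by
  have hk0 : (0 : ℝ) < k := by exact_mod_cast hk
  have hH0 : 0 < hadamardBound k L U := by unfold hadamardBound; positivity
  have hlogH : Real.logb 2 (hadamardBound k L U) =
      k * (L + 1) * Real.logb 2 U + k / 2 * Real.logb 2 k := by
    rw [hadamardBound, Real.logb_mul (by positivity) (by positivity),
      Real.logb_rpow_eq_mul_logb_of_pos hU, Real.logb_rpow_eq_mul_logb_of_pos hk0]
  rw [errorConstant, Real.logb_mul (by positivity) (by positivity),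
    Real.logb_mul (by positivity) (by positivity), Real.logb_mul (by positivity) (by positivity),
    Real.logb_pow, Real.logb_pow,
    Real.logb_mul two_ne_zero hU.ne', Real.logb_self_eq_one one_lt_two, hlogH,
    Real.logb_rpow_eq_mul_logb_of_pos hU]
  push_cast
  ring

theorem logb_two_errorConstant_le {k m : ℕ} (hk : 1 ≤ k) {L U Q : ℝ} (hU : 1 ≤ U) (hL0 : 0 ≤ L)
    (hL : L ≤ Real.logb 2 (2 * k + 1)) (hm : k * (2 : ℝ) ^ m ≤ Q + 1)
    (hQ : 3 * k + k ^ 2 / 2 * Real.logb 2 k + k * (k + 1) * (L + 1) * Real.logb 2 U ≤ Q + 1)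
    (hextra : 1 / 3 * (m : ℝ) ^ 2 * Real.log U ^ 2 ≤ Q) :
    Real.logb 2 (errorConstant k m L U (hadamardBound k L U)) ≤
      (2 * √2 + 2 * √(5 * Real.log U) + 2) * √(Q * Real.logb 2 Q) := by
  have hk1 : (1 : ℝ) ≤ k := by exact_mod_cast hk
  have hlogU : 0 ≤ Real.logb 2 U := Real.logb_nonneg one_lt_two hU
  have hlogk : 0 ≤ Real.logb 2 k := Real.logb_nonneg one_lt_two hk1
  have hUterm : 0 ≤ k * (k + 1) * (L + 1) * Real.logb 2 U := by positivity
  have hkterm : 0 ≤ k ^ 2 / 2 * Real.logb 2 k := by positivity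
  have hfirst : m + Real.logb 2 (k + 1) + k * Real.logb 2 k + 5 / 2 * √Q ≤
      (2 * √2 + 2) * √(Q * Real.logb 2 Q) := by
    rcases hk.eq_or_lt with rfl | hk2
    · have hone := natCast_add_one_add_sqrt_le (m := m) (Q := Q)
        (by rw [Nat.cast_one] at hQ hkterm hUterm; linarith) (by simpa using hm)
      norm_num
      linarith
    · exact natCast_add_logb_add_mul_logb_add_le hk2 (by linarith) hm
  have hlast := two_mul_add_one_mul_logb_le hk hU hL0 hL (Q := Q) (by linarith) (by linarith)
  rw [logb_two_errorConstant hk m L (by linarith)]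
  linarith [mul_logb_two_le_of_mul_log_sq_le hextra]

theorem rpow_mul_rpow_eq_hadamardBound_mul (k : ℕ) (L : ℝ) {U : ℝ} (hU : 0 < U) :
    (k : ℝ) ^ ((k : ℝ) / 2) * U ^ ((k + 1) * (L + 1)) = hadamardBound k L U * U ^ (L + 1) := by
  rw [hadamardBound, add_one_mul (k : ℝ), Real.rpow_add hU]
  ring

theorem four_mul_hadamardBound_le_and_two_mul_le {k : ℕ} (hk : 1 ≤ k) {L U B : ℝ} (hL : 0 ≤ L)
    (hU : 1 ≤ U) (hB : 4 * (k + 1) * (k : ℝ) ^ ((k : ℝ) / 2) * U ^ ((k + 1) * (L + 1)) ≤ B) :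
    4 * hadamardBound k L U ≤ B ∧ 2 * U ≤ B := by
  rw [mul_assoc, rpow_mul_rpow_eq_hadamardBound_mul k L (by linarith)] at hB
  have hH := one_le_hadamardBound hk hL hU
  have hV : U ≤ U ^ (L + 1) := Real.self_le_rpow_of_one_le hU (by linarith)
  have hHV := mul_le_mul hH hV (by linarith) (by linarith)
  have hprod : 4 * (hadamardBound k L U * U ^ (L + 1)) ≤ B := by
    refine le_trans ?_ hB
    gcongr
    linarith [k.cast_nonneg (α := ℝ)]
  constructor <;> nlinarith

theorem three_add_le_logb_two {k : ℕ} (hk : 1 ≤ k) {L U B : ℝ} (hU : 0 < U)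
    (hB : 4 * (k + 1) * (k : ℝ) ^ ((k : ℝ) / 2) * U ^ ((k + 1) * (L + 1)) ≤ B) :
    3 + k / 2 * Real.logb 2 k + (k + 1) * (L + 1) * Real.logb 2 U ≤ Real.logb 2 B := by
  have hk1 : (1 : ℝ) ≤ k := by exact_mod_cast hk
  calc 3 + k / 2 * Real.logb 2 k + (k + 1) * (L + 1) * Real.logb 2 U
      = Real.logb 2 (2 ^ 3 * (k : ℝ) ^ ((k : ℝ) / 2) * U ^ ((k + 1) * (L + 1))) := by
        rw [Real.logb_mul (by positivity) (by positivity),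
          Real.logb_mul (by positivity) (by positivity), Real.logb_pow,
          Real.logb_self_eq_one one_lt_two, Real.logb_rpow_eq_mul_logb_of_pos (by positivity),
          Real.logb_rpow_eq_mul_logb_of_pos hU]
        norm_num
    _ ≤ Real.logb 2 B := by
        refine Real.logb_le_logb_of_le one_lt_two (by positivity) (le_trans ?_ hB)
        gcongr
        linarith

theorem mul_logb_two_sub_one_le {k : ℕ} {B q : ℝ} (hB : 0 < B) (hq : B ^ k / 2 ≤ |q|) :
    k * Real.logb 2 B - 1 ≤ Real.logb 2 q := by
  calc k * Real.logb 2 B - 1 = Real.logb 2 (B ^ k / 2) := by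
        rw [Real.logb_div (by positivity) two_ne_zero, Real.logb_pow,
          Real.logb_self_eq_one one_lt_two]
    _ ≤ Real.logb 2 |q| := Real.logb_le_logb_of_le one_lt_two (by positivity) hq
    _ = Real.logb 2 q := Real.logb_abs 2 q

theorem logb_le_logb_two {d x : ℝ} (hd : 2 ≤ d) (hx : 1 ≤ x) : Real.logb d x ≤ Real.logb 2 x :=
  div_le_div_of_nonneg_left (Real.log_nonneg hx) (Real.log_pos one_lt_two)
    (Real.log_le_log two_pos hd)

theorem two_pow_le_logb_two_pow_pow {d b : ℕ} (hd : 2 ≤ d) (hb : 2 ≤ b) (m : ℕ) :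
    (2 : ℝ) ^ m ≤ Real.logb 2 ((b : ℝ) ^ d ^ m) := by
  have hlogb : 1 ≤ Real.logb 2 b := by
    rw [Real.le_logb_iff_rpow_le one_lt_two (by positivity), Real.rpow_one]
    exact_mod_cast hb
  rw [Real.logb_pow, Nat.cast_pow]
  calc (2 : ℝ) ^ m ≤ (d : ℝ) ^ m := by
        gcongr
        exact_mod_cast hd
    _ ≤ (d : ℝ) ^ m * Real.logb 2 b := le_mul_of_one_le_right (by positivity) hlogb

theorem errorConstant_le_two_rpow {k m : ℕ} (hk : 1 ≤ k) {L U B q : ℝ} (hU : 1 ≤ U) (hL0 : 0 ≤ L)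
    (hL : L ≤ Real.logb 2 (2 * k + 1)) (hm : (2 : ℝ) ^ m ≤ Real.logb 2 B)
    (hB : 4 * (k + 1) * (k : ℝ) ^ ((k : ℝ) / 2) * U ^ ((k + 1) * (L + 1)) ≤ B)
    (hq : B ^ k / 2 ≤ |q|)
    (hextra : 1 / 3 * (m : ℝ) ^ 2 * Real.log U ^ 2 ≤ k * Real.logb 2 B - 1) :
    errorConstant k m L U (hadamardBound k L U) ≤
      (2 : ℝ) ^ ((2 * √2 + 2 * √(5 * Real.log U) + 2) *
        √(Real.logb 2 q * Real.logb 2 (Real.logb 2 q))) := by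
  have hB0 : 0 < B := lt_of_lt_of_le (by positivity) hB
  have hH0 := one_le_hadamardBound hk hL0 hU
  have hlogq := mul_logb_two_sub_one_le hB0 hq
  have hlogB := mul_le_mul_of_nonneg_left (three_add_le_logb_two hk (by linarith) hB)
    k.cast_nonneg
  have hmq := mul_le_mul_of_nonneg_left hm (k.cast_nonneg (α := ℝ))
  rw [← Real.logb_le_iff_le_rpow one_lt_two (by unfold errorConstant; positivity)]
  exact logb_two_errorConstant_le hk hU hL0 hL (by linarith) (by linarith) (by linarith)

end LogarithmicBounds

theorem mahler_approximation_refined_upper_bound_general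
    (d b k m : ℕ) (hd : 2 ≤ d) (hb : 2 ≤ b) (hk : 1 ≤ k)
    (u : ℕ → ℤ) (hu0 : u 0 = 1) (U : ℝ) (hU : ∀ i < d, (|u i| : ℝ) ≤ U)
    (c : ℕ → ℤ) (hc : ∀ n : ℕ, c n = ((Nat.digits d (n - 1)).map u).prod)
    (a bc : ℕ → ℤ) (hak : a k ≠ 0)
    (hvan : ∀ i : ℕ, 1 ≤ i → i ≤ k →
      ∑ j ∈ Finset.range (k + 1), a j * c (i + j) = 0)
    (hbc : ∀ i < k, bc i = ∑ j ∈ Finset.Icc (i + 1) k, a j * c (j - i))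
    (hah : ∀ j ≤ k, (|a j| : ℝ) ≤
      U ^ ((k : ℝ) * (Real.logb d (2 * k + 1) + 1)) * (k : ℝ) ^ ((k : ℝ) / 2))
    (hbig : (b : ℝ) ^ (d ^ m) ≥
      4 * (k + 1) * (k : ℝ) ^ ((k : ℝ) / 2) *
        U ^ ((k + 1) * (Real.logb d (2 * k + 1) + 1)))
    (hextra : (k : ℝ) * (d : ℝ) ^ m * Real.logb 2 b - 1 ≥
      (1 / 3) * (m : ℝ) ^ 2 * (Real.log U) ^ 2) :
    |mahlerG d b u - mahlerPkm d b k m u bc / mahlerQkm d b k m a| ≤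
      2 * (2 : ℝ) ^ ((2 * Real.sqrt 2 + 2 * Real.sqrt (5 * Real.log U) + 2) *
          Real.sqrt (Real.logb 2 (mahlerQkm d b k m a) *
            Real.logb 2 (Real.logb 2 (mahlerQkm d b k m a)))) /
      (mahlerQkm d b k m a) ^ 2 := by
  have hd2 : (2 : ℝ) ≤ d := by exact_mod_cast hd
  have hU1 : 1 ≤ U := by simpa [hu0] using hU 0 (by omega)
  have hk1 : (1 : ℝ) ≤ 2 * k + 1 := by linarith [k.cast_nonneg (α := ℝ)]
  have hL0 := Real.logb_nonneg (by linarith : (1 : ℝ) < d) hk1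
  have hL := logb_le_logb_two hd2 hk1
  obtain ⟨hHb, hUb⟩ := four_mul_hadamardBound_le_and_two_mul_le hk hL0 hU1 hbig
  have hdigit : ∀ n, c (n + 1) = digitProd d u n := fun n => hc (n + 1)
  have hvan' : ∀ i < k, ∑ j ∈ Finset.range (k + 1), a j * digitProd d u (i + j) = 0 := by
    intro i hi
    simpa only [add_right_comm i 1, hdigit] using hvan (i + 1) (by omega) hi
  have hbc' : ∀ i < k,
      bc i = ∑ j ∈ Finset.Icc (i + 1) k, a j * digitProd d u (j - i - 1) := by
    intro i hi
    rw [hbc i hi]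
    exact Finset.sum_congr rfl fun j _ => by rw [hc, digitProd]
  refine (abs_mahlerG_sub_div_le hd hb hu0 hU hak hvan' hbc' hah hHb hUb).trans ?_
  gcongr
  refine errorConstant_le_two_rpow hk hU1 hL0 hL
    (two_pow_le_logb_two_pow_pow hd hb m) hbig
    (pow_div_two_le_abs_mahlerQkm (by omega) hb hak hah hHb) ?_
  rwa [Real.logb_pow, Nat.cast_pow, ← mul_assoc]

/-- (Proposition 1, final estimate.)  Same setup as the two-sided bounds: `d ≥ 2`,
`P(z) = 1 + u_1 z + ⋯ + u_{d-1}z^{d-1} ∈ ℤ[z]`, `g(z) = z^{-1}∏ P(z^{-d^t})` badly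
approximable, `b ≥ 2`, `k ≥ 2`, `m ≥ 1`, with
`b^{d^m} ≥ 4(k+1)k^{k/2}U^{(k+1)(log_d(2k+1)+1)}`.  If additionally
`k·d^m·log₂ b - 1 ≥ (1/3) m² (log U)²`, then
`|g(b) - p_{k,m}/q_{k,m}| ≤ 3 · 2^{C √(log₂ q_{k,m} · log₂ log₂ q_{k,m})} / q_{k,m}²`,
where `C = 2√2 + 2√(5 log U) + 2`. -/
theorem mahler_approximation_refined_upper_bound
    (d b k m : ℕ) (hd : 2 ≤ d) (hb : 2 ≤ b) (hk : 2 ≤ k) (hm : 1 ≤ m)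
    (u : ℕ → ℤ) (hu0 : u 0 = 1) (hud : ∀ i, d ≤ i → u i = 0)
    (U : ℝ) (hU1 : 1 ≤ U) (hU : ∀ i, (|u i| : ℝ) ≤ U)
    (c : ℕ → ℤ) (hc : ∀ n : ℕ, c n = ((Nat.digits d (n - 1)).map u).prod)
    (a bc : ℕ → ℤ) (hak : a k ≠ 0)
    (hvan : ∀ i : ℕ, 1 ≤ i → i ≤ k →
      ∑ j ∈ Finset.range (k + 1), a j * c (i + j) = 0)
    (hα : ∑ j ∈ Finset.range (k + 1), a j * c (k + 1 + j) ≠ 0)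
    (hbc : ∀ i : ℕ, bc i = ∑ j ∈ Finset.Icc (i + 1) k, a j * c (j - i))
    (hah : ∀ j : ℕ, (|a j| : ℝ) ≤
      U ^ ((k : ℝ) * (Real.logb d (2 * k + 1) + 1)) * (k : ℝ) ^ ((k : ℝ) / 2))
    (hbig : (b : ℝ) ^ (d ^ m) ≥
      4 * (k + 1) * (k : ℝ) ^ ((k : ℝ) / 2) *
        U ^ ((k + 1) * (Real.logb d (2 * k + 1) + 1)))
    (hextra : (k : ℝ) * (d : ℝ) ^ m * Real.logb 2 b - 1 ≥
      (1 / 3) * (m : ℝ) ^ 2 * (Real.log U) ^ 2) :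
    |mahlerG d b u - mahlerPkm d b k m u bc / mahlerQkm d b k m a| ≤
      3 * (2 : ℝ) ^ ((2 * Real.sqrt 2 + 2 * Real.sqrt (5 * Real.log U) + 2) *
          Real.sqrt (Real.logb 2 (mahlerQkm d b k m a) *
            Real.logb 2 (Real.logb 2 (mahlerQkm d b k m a)))) /
      (mahlerQkm d b k m a) ^ 2 := by
  refine (mahler_approximation_refined_upper_bound_general d b k m hd hb (by omega) u hu0 U
    (fun i _ => hU i) c hc a bc hak hvan (fun i _ => hbc i) (fun j _ => hah j) hbig hextra).trans ?_
  gcongr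
  norm_num
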